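/- arXiv:2402.11921 — 5 statements merged into one kernel-verified Lean document; each statement's English description precedes it below -/
import Mathlib

section
/- Let ρ : [0,1] → (0,1) be continuous and let V : (0,1) → (0,∞) be measurable and satisfy Condition (V1). Suppose u : (0,∞)×(0,1) → [0,1] is measurable and satisfies ∫₀^T ∫₀¹ V(x)(u(s,x) − ρ(x))² dx ds < ∞ for every T > 0. Then for every t > 0, lim_{y→0+} (1/y) ∫₀^t ∫₀^y |u(s,x) − ρ(0)| dx ds = 0 and lim_{y→0+} (1/y) ∫₀^t ∫_{1−y}^1 |u(s,x) − ρ(1)| dx ds = 0. -/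
/-!
The Cauchy–Schwarz inequality with weight `V` gives
`(∫∫ |u - ρ|)² ≤ (∫∫ 1 / V) (∫∫ V (u - ρ)²)` over `(0, t) × (0, y)`. Condition (V1) makes the first
factor `O(y²)`, and the second one tends to `0` by absolute continuity of the integral, so the
average of `|u - ρ|` over the layer vanishes as `y → 0+`. Continuity of `ρ` then allows one to
replace `ρ x` by its boundary value.
-/

open MeasureTheory Set Filter Topology

/-- Condition (V1): `limsup_{y→0+} y⁻² ∫₀^y [1/V(x) + 1/V(1−x)] dx < ∞`. -/
def CondV1 (V : ℝ → ℝ) : Prop :=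
  Filter.limsup
    (fun y : ℝ => ENNReal.ofReal (1 / y ^ 2) *
      ∫⁻ x in Ioo (0 : ℝ) y, ENNReal.ofReal (1 / V x + 1 / V (1 - x)))
    (𝓝[>] (0 : ℝ)) < ⊤

open scoped ENNReal

-- Hölder's inequality is applied to a measurable minorant of `f` with the same integral.
lemma sq_lintegral_le_lintegral_inv_mul_lintegral_mul_sq {α : Type*} [MeasurableSpace α]
    {μ : Measure α} {w : α → ℝ≥0∞} (hw : AEMeasurable w μ) (hw_ne_zero : ∀ᵐ a ∂μ, w a ≠ 0)
    (hw_ne_top : ∀ᵐ a ∂μ, w a ≠ ∞) (f : α → ℝ≥0∞) :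
    (∫⁻ a, f a ∂μ) ^ 2 ≤ (∫⁻ a, (w a)⁻¹ ∂μ) * ∫⁻ a, w a * f a ^ 2 ∂μ := by
  obtain ⟨g, hg, hgf, hfg⟩ := exists_measurable_le_lintegral_eq μ f
  have g_eq : ∀ᵐ a ∂μ, g a = (w a)⁻¹ ^ (1 / 2 : ℝ) * (w a ^ (1 / 2 : ℝ) * g a) := by
    filter_upwards [hw_ne_zero, hw_ne_top] with a h0 htop
    rw [← mul_assoc, ← ENNReal.mul_rpow_of_nonneg _ _ (by norm_num),
      ENNReal.inv_mul_cancel h0 htop, ENNReal.one_rpow, one_mul]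
  have sq_sqrt (x : ℝ≥0∞) : (x ^ (1 / 2 : ℝ)) ^ 2 = x := by
    rw [← ENNReal.rpow_natCast, ← ENNReal.rpow_mul]
    norm_num
  have holder := ENNReal.lintegral_mul_le_Lp_mul_Lq μ Real.HolderConjugate.two_two
    (hw.inv.pow_const (1 / 2 : ℝ)) ((hw.pow_const (1 / 2 : ℝ)).mul hg.aemeasurable)
  simp only [Pi.mul_apply, Pi.inv_apply, ENNReal.rpow_two, mul_pow, sq_sqrt] at holder
  calc (∫⁻ a, f a ∂μ) ^ 2
      = (∫⁻ a, (w a)⁻¹ ^ (1 / 2 : ℝ) * (w a ^ (1 / 2 : ℝ) * g a) ∂μ) ^ 2 := by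
        rw [hfg, lintegral_congr_ae g_eq]
    _ ≤ ((∫⁻ a, (w a)⁻¹ ∂μ) ^ (1 / 2 : ℝ) * (∫⁻ a, w a * g a ^ 2 ∂μ) ^ (1 / 2 : ℝ)) ^ 2 := by
        gcongr
    _ = (∫⁻ a, (w a)⁻¹ ∂μ) * ∫⁻ a, w a * g a ^ 2 ∂μ := by
        rw [mul_pow, sq_sqrt, sq_sqrt]
    _ ≤ (∫⁻ a, (w a)⁻¹ ∂μ) * ∫⁻ a, w a * f a ^ 2 ∂μ := by
        gcongr with a
        exact hgf a

section OrderTopology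

variable {α : Type*} [TopologicalSpace α] [LinearOrder α] [OrderTopology α] (a : α)

lemma tendsto_Ioo_right_smallSets_nhdsGT [NoMaxOrder α] :
    Tendsto (fun b ↦ Ioo a b) (𝓝[>] a) (𝓝[>] a).smallSets := by
  refine tendsto_smallSets_iff.2 fun s hs ↦ ?_
  obtain ⟨c, hac, hc⟩ := mem_nhdsGT_iff_exists_Ioo_subset.1 hs
  filter_upwards [Ioo_mem_nhdsGT hac] with b hb
  exact (Ioo_subset_Ioo_right hb.2.le).trans hc

lemma tendsto_Ioo_left_smallSets_nhdsLT [NoMinOrder α] :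
    Tendsto (fun b ↦ Ioo b a) (𝓝[<] a) (𝓝[<] a).smallSets := by
  refine tendsto_smallSets_iff.2 fun s hs ↦ ?_
  obtain ⟨c, hca, hc⟩ := mem_nhdsLT_iff_exists_Ioo_subset.1 hs
  filter_upwards [Ioo_mem_nhdsLT hca] with b hb
  exact (Ioo_subset_Ioo_left hb.1.le).trans hc

end OrderTopology

lemma tendsto_iSup_enorm_sub_zero {X ι E : Type*} [SeminormedAddCommGroup E] {ρ : X → E} {r : E}
    {l : Filter ι} {F : Filter X} {S : ι → Set X} (hρ : Tendsto ρ F (𝓝 r))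
    (hS : Tendsto S l F.smallSets) :
    Tendsto (fun i ↦ ⨆ x ∈ S i, ‖ρ x - r‖ₑ) l (𝓝 0) := by
  rw [ENNReal.tendsto_nhds_zero]
  intro ε hε
  have hρε : ∀ᶠ x in F, ‖ρ x - r‖ₑ ≤ ε := by
    simpa only [edist_eq_enorm_sub] using
      (EMetric.tendsto_nhds.1 hρ ε hε).mono fun _ ↦ le_of_lt
  filter_upwards [hS.eventually (eventually_smallSets_forall.2 hρε)] with i hi
  exact iSup₂_le hi

section Layers

variable {T X ι E : Type*} [MeasurableSpace T] [MeasurableSpace X] [NormedAddCommGroup E]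
  {τ : Measure T} {ν : Measure X} {w : X → ℝ≥0∞} {l : Filter ι} {F : Filter X} {S : ι → Set X}
  {U : Set X} [SFinite ν]

lemma sq_lintegral_prod_le_of_weight_snd [SFinite τ] (hw : AEMeasurable w ν)
    (hw_ne_zero : ∀ᵐ x ∂ν, w x ≠ 0) (hw_ne_top : ∀ᵐ x ∂ν, w x ≠ ∞) (f : T × X → ℝ≥0∞) :
    (∫⁻ z, f z ∂τ.prod ν) ^ 2 ≤
      (τ univ * ∫⁻ x, (w x)⁻¹ ∂ν) * ∫⁻ z, w z.2 * f z ^ 2 ∂τ.prod ν := by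
  have lintegral_inv_snd : ∫⁻ z, (w z.2)⁻¹ ∂τ.prod ν = τ univ * ∫⁻ x, (w x)⁻¹ ∂ν := by
    simpa only [one_mul, lintegral_one, Pi.inv_apply] using
      lintegral_prod_mul (μ := τ) (aemeasurable_const (b := (1 : ℝ≥0∞))) hw.inv
  rw [← lintegral_inv_snd]
  exact sq_lintegral_le_lintegral_inv_mul_lintegral_mul_sq hw.comp_snd
    (Measure.quasiMeasurePreserving_snd.ae hw_ne_zero)
    (Measure.quasiMeasurePreserving_snd.ae hw_ne_top) f

lemma inv_measure_mul_lintegral_enorm_sub_const_le [SFinite τ] {s : Set X} (hs : MeasurableSet s)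
    (u : T × X → E) (ρ : X → E) (r : E) :
    (ν s)⁻¹ * ∫⁻ z, ‖u z - r‖ₑ ∂τ.prod (ν.restrict s) ≤
      (ν s)⁻¹ * (∫⁻ z, ‖u z - ρ z.2‖ₑ ∂τ.prod (ν.restrict s)) +
        τ univ * ⨆ x ∈ s, ‖ρ x - r‖ₑ := by
  set d : ℝ≥0∞ := ⨆ x ∈ s, ‖ρ x - r‖ₑ
  have enorm_sub_le : ∀ᵐ z ∂τ.prod (ν.restrict s), ‖u z - r‖ₑ ≤ ‖u z - ρ z.2‖ₑ + d := by
    filter_upwards [Measure.quasiMeasurePreserving_snd.ae (ae_restrict_mem hs)] with z hz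
    calc ‖u z - r‖ₑ = ‖(u z - ρ z.2) + (ρ z.2 - r)‖ₑ := by rw [sub_add_sub_cancel]
      _ ≤ ‖u z - ρ z.2‖ₑ + ‖ρ z.2 - r‖ₑ := enorm_add_le _ _
      _ ≤ ‖u z - ρ z.2‖ₑ + d := by
          gcongr
          exact le_iSup₂ (f := fun x (_ : x ∈ s) ↦ ‖ρ x - r‖ₑ) z.2 hz
  calc (ν s)⁻¹ * ∫⁻ z, ‖u z - r‖ₑ ∂τ.prod (ν.restrict s)
      ≤ (ν s)⁻¹ * ∫⁻ z, (‖u z - ρ z.2‖ₑ + d) ∂τ.prod (ν.restrict s) := by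
        gcongr 1
        exact lintegral_mono_ae enorm_sub_le
    _ = (ν s)⁻¹ * (∫⁻ z, ‖u z - ρ z.2‖ₑ ∂τ.prod (ν.restrict s))
          + (ν s)⁻¹ * ν s * (τ univ * d) := by
        rw [lintegral_add_right _ measurable_const, lintegral_const, ← univ_prod_univ,
          Measure.prod_prod, Measure.restrict_apply_univ]
        ring
    _ ≤ (ν s)⁻¹ * (∫⁻ z, ‖u z - ρ z.2‖ₑ ∂τ.prod (ν.restrict s)) + τ univ * d :=
        add_le_add le_rfl (mul_le_of_le_one_left' (ENNReal.inv_mul_le_one _))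

variable [IsFiniteMeasure τ]

lemma tendsto_lintegral_prod_restrict_zero {f : T × X → ℝ≥0∞} (hU : U ∈ F)
    (hf : ∫⁻ z, f z ∂τ.prod (ν.restrict U) ≠ ∞) (hS : Tendsto S l F.smallSets)
    (hνS : Tendsto (fun i ↦ ν (S i)) l (𝓝 0)) :
    Tendsto (fun i ↦ ∫⁻ z, f z ∂τ.prod (ν.restrict (S i))) l (𝓝 0) := by
  have measure_slab_le (i : ι) : τ.prod (ν.restrict U) (univ ×ˢ S i) ≤ τ univ * ν (S i) := by
    rw [Measure.prod_prod]
    gcongr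
    exact Measure.restrict_le_self
  have measure_slab : Tendsto (fun i ↦ τ.prod (ν.restrict U) (univ ×ˢ S i)) l (𝓝 0) := by
    refine tendsto_of_tendsto_of_tendsto_of_le_of_le tendsto_const_nhds ?_
      (fun _ ↦ zero_le) measure_slab_le
    simpa only [mul_zero] using
      ENNReal.Tendsto.const_mul hνS (Or.inr (measure_ne_top τ univ))
  refine (tendsto_setLIntegral_zero hf measure_slab).congr' ?_
  filter_upwards [tendsto_smallSets_iff.1 hS U hU] with i hi
  rw [← Measure.prod_restrict, Measure.restrict_univ, Measure.restrict_restrict_of_subset hi]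

lemma tendsto_inv_measure_mul_lintegral_zero_of_energy {f : T × X → ℝ≥0∞} {C : ℝ≥0∞}
    (hw : AEMeasurable w ν) (hw_ne_zero : ∀ᶠ x in F, w x ≠ 0) (hw_ne_top : ∀ᶠ x in F, w x ≠ ∞)
    (hU : U ∈ F) (hf : ∫⁻ z, w z.2 * f z ^ 2 ∂τ.prod (ν.restrict U) ≠ ∞)
    (hS : Tendsto S l F.smallSets) (hSm : ∀ i, MeasurableSet (S i))
    (hνS : Tendsto (fun i ↦ ν (S i)) l (𝓝 0)) (hC : C ≠ ∞)
    (hinv : ∀ᶠ i in l, ∫⁻ x in S i, (w x)⁻¹ ∂ν ≤ C * ν (S i) ^ 2) :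
    Tendsto (fun i ↦ (ν (S i))⁻¹ * ∫⁻ z, f z ∂τ.prod (ν.restrict (S i))) l (𝓝 0) := by
  set energy : ι → ℝ≥0∞ := fun i ↦ ∫⁻ z, w z.2 * f z ^ 2 ∂τ.prod (ν.restrict (S i))
  have energy_zero : Tendsto (fun i ↦ τ univ * C * energy i) l (𝓝 0) := by
    simpa only [mul_zero] using ENNReal.Tendsto.const_mul
      (tendsto_lintegral_prod_restrict_zero hU hf hS hνS)
      (Or.inr (ENNReal.mul_ne_top (measure_ne_top τ univ) hC))
  have sq_average_le : ∀ᶠ i in l,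
      ((ν (S i))⁻¹ * ∫⁻ z, f z ∂τ.prod (ν.restrict (S i))) ^ 2 ≤ τ univ * C * energy i := by
    filter_upwards [hS.eventually (eventually_smallSets_forall.2 (hw_ne_zero.and hw_ne_top)), hinv]
      with i hwi hinvi
    calc ((ν (S i))⁻¹ * ∫⁻ z, f z ∂τ.prod (ν.restrict (S i))) ^ 2
        = (ν (S i))⁻¹ ^ 2 * (∫⁻ z, f z ∂τ.prod (ν.restrict (S i))) ^ 2 := mul_pow _ _ _
      _ ≤ (ν (S i))⁻¹ ^ 2 * ((τ univ * (C * ν (S i) ^ 2)) * energy i) := by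
          gcongr
          refine (sq_lintegral_prod_le_of_weight_snd hw.restrict
            (ae_restrict_of_forall_mem (hSm i) fun x hx ↦ (hwi x hx).1)
            (ae_restrict_of_forall_mem (hSm i) fun x hx ↦ (hwi x hx).2) f).trans ?_
          gcongr
      _ = ((ν (S i))⁻¹ * ν (S i)) ^ 2 * (τ univ * C * energy i) := by ring
      _ ≤ τ univ * C * energy i :=
          mul_le_of_le_one_left' (pow_le_one' (ENNReal.inv_mul_le_one _) 2)
  rw [ENNReal.tendsto_nhds_zero] at energy_zero ⊢
  intro ε hε
  filter_upwards [sq_average_le, energy_zero (ε ^ 2) (by positivity)] with i hi hεi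
  exact (ENNReal.pow_le_pow_left_iff two_ne_zero).1 (hi.trans hεi)

lemma tendsto_inv_measure_mul_lintegral_enorm_sub_const {u : T × X → E} {ρ : X → E} {r : E}
    (hρ : Tendsto ρ F (𝓝 r)) (hS : Tendsto S l F.smallSets) (hSm : ∀ i, MeasurableSet (S i))
    (huρ : Tendsto (fun i ↦ (ν (S i))⁻¹ * ∫⁻ z, ‖u z - ρ z.2‖ₑ ∂τ.prod (ν.restrict (S i)))
      l (𝓝 0)) :
    Tendsto (fun i ↦ (ν (S i))⁻¹ * ∫⁻ z, ‖u z - r‖ₑ ∂τ.prod (ν.restrict (S i))) l (𝓝 0) := by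
  refine tendsto_of_tendsto_of_tendsto_of_le_of_le tendsto_const_nhds ?_
    (fun _ ↦ zero_le) fun i ↦ inv_measure_mul_lintegral_enorm_sub_const_le (hSm i) u ρ r
  simpa only [mul_zero, add_zero] using huρ.add
    (ENNReal.Tendsto.const_mul (tendsto_iSup_enorm_sub_zero hρ hS) (Or.inr (measure_ne_top τ univ)))

lemma tendsto_inv_measureReal_mul_integral_norm_sub_const {u : T × X → E} {ρ : X → E} {r : E}
    {C : ℝ≥0∞} (hw : AEMeasurable w ν) (hw_ne_zero : ∀ᶠ x in F, w x ≠ 0)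
    (hw_ne_top : ∀ᶠ x in F, w x ≠ ∞) (hu : AEStronglyMeasurable u (τ.prod ν))
    (hρ : Tendsto ρ F (𝓝 r)) (hU : U ∈ F)
    (henergy : ∫⁻ z, w z.2 * ‖u z - ρ z.2‖ₑ ^ 2 ∂τ.prod (ν.restrict U) ≠ ∞)
    (hS : Tendsto S l F.smallSets) (hSm : ∀ i, MeasurableSet (S i))
    (hνS : Tendsto (fun i ↦ ν (S i)) l (𝓝 0)) (hC : C ≠ ∞)
    (hinv : ∀ᶠ i in l, ∫⁻ x in S i, (w x)⁻¹ ∂ν ≤ C * ν (S i) ^ 2) :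
    Tendsto (fun i ↦ (ν.real (S i))⁻¹ * ∫ z, ‖u z - r‖ ∂τ.prod (ν.restrict (S i))) l (𝓝 0) := by
  have lintegral_average := tendsto_inv_measure_mul_lintegral_enorm_sub_const hρ hS hSm
    (tendsto_inv_measure_mul_lintegral_zero_of_energy hw hw_ne_zero hw_ne_top hU henergy hS hSm
      hνS hC hinv)
  refine ((ENNReal.tendsto_toReal ENNReal.zero_ne_top).comp lintegral_average).congr fun i ↦ ?_
  have hu_slab : AEStronglyMeasurable (fun z ↦ u z - r) (τ.prod (ν.restrict (S i))) :=
    (hu.mono_measure (Measure.prod_mono le_rfl Measure.restrict_le_self)).sub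
      aestronglyMeasurable_const
  rw [integral_norm_eq_lintegral_enorm hu_slab, measureReal_def, ← ENNReal.toReal_inv,
    ← ENNReal.toReal_mul, Function.comp_apply]

end Layers

namespace CondV1

variable {V : ℝ → ℝ}

lemma comp_one_sub (hV1 : CondV1 V) : CondV1 fun x ↦ V (1 - x) := by
  simpa only [CondV1, sub_sub_cancel, add_comm] using hV1

lemma exists_lintegral_inv_le_left (hV1 : CondV1 V) (hVpos : ∀ x ∈ Ioo (0 : ℝ) 1, 0 < V x) :
    ∃ C : ℝ≥0∞, C ≠ ∞ ∧ ∀ᶠ y in 𝓝[>] (0 : ℝ),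
      ∫⁻ x in Ioo 0 y, (ENNReal.ofReal (V x))⁻¹ ≤ C * ENNReal.ofReal y ^ 2 := by
  obtain ⟨C, hlimsup, hC⟩ := exists_between hV1
  refine ⟨C, hC.ne, ?_⟩
  filter_upwards [eventually_lt_of_limsup_lt hlimsup, Ioo_mem_nhdsGT one_pos] with y hy hy01
  have sq_ne_zero : ENNReal.ofReal y ^ 2 ≠ 0 := by simp [hy01.1]
  have sq_ne_top : ENNReal.ofReal y ^ 2 ≠ ∞ := ENNReal.pow_ne_top ENNReal.ofReal_ne_top
  rw [one_div, ENNReal.ofReal_inv_of_pos (pow_pos hy01.1 2), ENNReal.ofReal_pow hy01.1.le] at hy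
  calc ∫⁻ x in Ioo 0 y, (ENNReal.ofReal (V x))⁻¹
      ≤ ∫⁻ x in Ioo 0 y, ENNReal.ofReal (1 / V x + 1 / V (1 - x)) := by
        refine setLIntegral_mono' measurableSet_Ioo fun x hx ↦ ?_
        rw [← ENNReal.ofReal_inv_of_pos (hVpos x ⟨hx.1, hx.2.trans hy01.2⟩), one_div]
        have : 0 < V (1 - x) := hVpos (1 - x) ⟨by linarith [hx.2, hy01.2], by linarith [hx.1]⟩
        exact ENNReal.ofReal_le_ofReal (le_add_of_nonneg_right (by positivity))
    _ ≤ ENNReal.ofReal y ^ 2 * C := (ENNReal.inv_mul_le_iff sq_ne_zero sq_ne_top).1 hy.le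
    _ = C * ENNReal.ofReal y ^ 2 := mul_comm _ _

lemma exists_lintegral_inv_le_right (hV1 : CondV1 V) (hVpos : ∀ x ∈ Ioo (0 : ℝ) 1, 0 < V x) :
    ∃ C : ℝ≥0∞, C ≠ ∞ ∧ ∀ᶠ y in 𝓝[>] (0 : ℝ),
      ∫⁻ x in Ioo (1 - y) 1, (ENNReal.ofReal (V x))⁻¹ ≤ C * ENNReal.ofReal y ^ 2 := by
  obtain ⟨C, hC, hle⟩ := hV1.comp_one_sub.exists_lintegral_inv_le_left
    fun x hx ↦ hVpos (1 - x) ⟨sub_pos.2 hx.2, sub_lt_self 1 hx.1⟩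
  refine ⟨C, hC, hle.mono fun y hy ↦ ?_⟩
  rwa [← (Measure.measurePreserving_sub_left volume 1).setLIntegral_comp_preimage_emb
    (MeasurableEquiv.subLeft (1 : ℝ)).measurableEmbedding, preimage_const_sub_Ioo, sub_self,
    sub_sub_cancel]

end CondV1

section Interval

variable {E : Type*} [NormedAddCommGroup E] {V : ℝ → ℝ} {ρ : ℝ → E} {u : ℝ × ℝ → E} {t : ℝ}

lemma tendsto_one_div_mul_setIntegral_norm_sub_const {r : E} {F : Filter ℝ} {S : ℝ → Set ℝ}
    {C : ℝ≥0∞} (hVmeas : AEMeasurable V) (hVpos : ∀ x ∈ Ioo (0 : ℝ) 1, 0 < V x)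
    (hρ : Tendsto ρ F (𝓝 r)) (hu : AEStronglyMeasurable u)
    (henergy : ∫⁻ z in Ioo (0 : ℝ) t ×ˢ Ioo (0 : ℝ) 1,
      ENNReal.ofReal (V z.2 * ‖u z - ρ z.2‖ ^ 2) < ∞)
    (hF : Ioo (0 : ℝ) 1 ∈ F) (hS : Tendsto S (𝓝[>] 0) F.smallSets)
    (hSm : ∀ y, MeasurableSet (S y)) (hSvol : ∀ y, volume (S y) = ENNReal.ofReal y) (hC : C ≠ ∞)
    (hinv : ∀ᶠ y in 𝓝[>] (0 : ℝ),
      ∫⁻ x in S y, (ENNReal.ofReal (V x))⁻¹ ≤ C * ENNReal.ofReal y ^ 2) :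
    Tendsto (fun y : ℝ ↦ (1 / y) * ∫ z in Ioo (0 : ℝ) t ×ˢ S y, ‖u z - r‖) (𝓝[>] 0) (𝓝 0) := by
  have volume_zero : Tendsto (fun y ↦ volume (S y)) (𝓝[>] 0) (𝓝 0) := by
    simp only [hSvol]
    simpa only [ENNReal.ofReal_zero] using
      (ENNReal.continuous_ofReal.tendsto 0).mono_left nhdsWithin_le_nhds
  have energy_prod : ∫⁻ z, ENNReal.ofReal (V z.2) * ‖u z - ρ z.2‖ₑ ^ 2
      ∂(volume.restrict (Ioo 0 t)).prod (volume.restrict (Ioo 0 1)) ≠ ∞ := by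
    rw [Measure.prod_restrict, ← Measure.volume_eq_prod]
    simpa only [ENNReal.ofReal_mul' (sq_nonneg _), ENNReal.ofReal_pow (norm_nonneg _),
      ofReal_norm] using henergy.ne
  have hu_prod : AEStronglyMeasurable u ((volume.restrict (Ioo 0 t)).prod volume) :=
    hu.mono_measure (Measure.prod_mono Measure.restrict_le_self le_rfl)
  refine (tendsto_inv_measureReal_mul_integral_norm_sub_const
    hVmeas.ennreal_ofReal (mem_of_superset hF fun x hx ↦ (ENNReal.ofReal_pos.2 (hVpos x hx)).ne')
    (Eventually.of_forall fun _ ↦ ENNReal.ofReal_ne_top) hu_prod hρ hF energy_prod hS hSm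
    volume_zero hC (by simpa only [hSvol] using hinv)).congr' ?_
  filter_upwards [self_mem_nhdsWithin] with y hy
  rw [measureReal_def, hSvol, ENNReal.toReal_ofReal (le_of_lt hy), one_div, Measure.prod_restrict,
    Measure.volume_eq_prod]

theorem boundary_density_prescribed_general {r₀ r₁ : E} (hVmeas : AEMeasurable V)
    (hVpos : ∀ x ∈ Ioo (0 : ℝ) 1, 0 < V x) (hV1 : CondV1 V)
    (hρ₀ : Tendsto ρ (𝓝[>] 0) (𝓝 r₀)) (hρ₁ : Tendsto ρ (𝓝[<] 1) (𝓝 r₁))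
    (hu : AEStronglyMeasurable u)
    (henergy : ∫⁻ z in Ioo (0 : ℝ) t ×ˢ Ioo (0 : ℝ) 1,
      ENNReal.ofReal (V z.2 * ‖u z - ρ z.2‖ ^ 2) < ∞) :
    Tendsto (fun y : ℝ ↦ (1 / y) * ∫ z in Ioo (0 : ℝ) t ×ˢ Ioo (0 : ℝ) y, ‖u z - r₀‖)
        (𝓝[>] 0) (𝓝 0) ∧
      Tendsto (fun y : ℝ ↦ (1 / y) * ∫ z in Ioo (0 : ℝ) t ×ˢ Ioo (1 - y) (1 : ℝ), ‖u z - r₁‖)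
        (𝓝[>] 0) (𝓝 0) := by
  obtain ⟨C₀, hC₀, hinv₀⟩ := hV1.exists_lintegral_inv_le_left hVpos
  obtain ⟨C₁, hC₁, hinv₁⟩ := hV1.exists_lintegral_inv_le_right hVpos
  have one_sub : Tendsto (fun y : ℝ ↦ 1 - y) (𝓝[>] 0) (𝓝[<] 1) := by
    refine tendsto_nhdsWithin_iff.2 ⟨?_,
      eventually_nhdsWithin_of_forall fun _ hy ↦ sub_lt_self (1 : ℝ) hy⟩
    simpa only [sub_zero] using
      ((continuous_sub_left (1 : ℝ)).tendsto 0).mono_left nhdsWithin_le_nhds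
  exact ⟨tendsto_one_div_mul_setIntegral_norm_sub_const hVmeas hVpos hρ₀ hu henergy
      (Ioo_mem_nhdsGT one_pos) (tendsto_Ioo_right_smallSets_nhdsGT 0) (fun _ ↦ measurableSet_Ioo)
      (fun y ↦ by rw [Real.volume_Ioo, sub_zero]) hC₀ hinv₀,
    tendsto_one_div_mul_setIntegral_norm_sub_const hVmeas hVpos hρ₁ hu henergy
      (Ioo_mem_nhdsLT one_pos) ((tendsto_Ioo_left_smallSets_nhdsLT 1).comp one_sub)
      (fun _ ↦ measurableSet_Ioo) (fun y ↦ by rw [Real.volume_Ioo, sub_sub_cancel]) hC₁ hinv₁⟩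

end Interval

/-- under Condition (V1) and the energy estimate, the macroscopic
density near the boundary is prescribed by the reservoir profile:
`(1/y) ∫₀ᵗ ∫₀^y |u(s,x) − ρ(0)| dx ds → 0` as `y → 0+`, and similarly at the
right boundary. -/
theorem boundary_density_prescribed (V ρ : ℝ → ℝ)
    (hVmeas : Measurable V) (hVpos : ∀ x ∈ Ioo (0 : ℝ) 1, 0 < V x)
    (hV1 : CondV1 V)
    (hρcont : ContinuousOn ρ (Icc 0 1)) (hρmem : ∀ x ∈ Icc (0 : ℝ) 1, ρ x ∈ Ioo (0 : ℝ) 1)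
    (u : ℝ × ℝ → ℝ) (humeas : Measurable u) (humem : ∀ z : ℝ × ℝ, u z ∈ Icc (0 : ℝ) 1)
    (henergy : ∀ T > 0, (∫⁻ z in Ioo (0 : ℝ) T ×ˢ Ioo (0 : ℝ) 1,
      ENNReal.ofReal (V z.2 * (u z - ρ z.2) ^ 2)) < ⊤) :
    ∀ t > 0,
      Tendsto (fun y : ℝ =>
          (1 / y) * ∫ z in Ioo (0 : ℝ) t ×ˢ Ioo (0 : ℝ) y, |u z - ρ 0|)
        (𝓝[>] (0 : ℝ)) (𝓝 0) ∧
      Tendsto (fun y : ℝ =>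
          (1 / y) * ∫ z in Ioo (0 : ℝ) t ×ˢ Ioo (1 - y) (1 : ℝ), |u z - ρ 1|)
        (𝓝[>] (0 : ℝ)) (𝓝 0) := by
  exact fun t ht ↦ boundary_density_prescribed_general hVmeas.aemeasurable hVpos hV1
    ((hρcont 0 (by simp)).mono_of_mem_nhdsWithin (Icc_mem_nhdsGT one_pos))
    ((hρcont 1 (by simp)).mono_of_mem_nhdsWithin (Icc_mem_nhdsLT one_pos))
    humeas.aestronglyMeasurable (by simpa only [Real.norm_eq_abs, sq_abs] using henergy t ht)
end

section
/- Fix γ ≥ 1 and ρ₀, ρ₁ ∈ (0,1). Define V(x) = x^{−γ} + (1−x)^{−γ} and ρ(x) = (ρ₀(1−x)^γ + ρ₁ x^γ)/((1−x)^γ + x^γ) for x ∈ (0,1), with ρ(0) = ρ₀ and ρ(1) = ρ₁. Then V satisfies Condition (V1), i.e. limsup_{y→0+} y⁻² ∫₀^y [1/V(x) + 1/V(1−x)] dx < ∞, and the pair (V,ρ) satisfies Condition (V2), i.e. lim_{y→0+} [ ∫₀^y V(x)(ρ(x)−ρ₀)² dx + ∫_{1−y}^1 V(x)(ρ(x)−ρ₁)²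 dx ] = 0. -/
open MeasureTheory Set Filter Topology

open Asymptotics

/-!
Both conditions follow from pointwise bounds at `0+`, since `f(x) = O(x^k)` gives
`∫₀^y f = O(y^{k+1})`. For (V1), `1/V(x) ≤ x^γ ≤ x`. For (V2), the squared increment of `ρ` cancels
the singularity of `V` and leaves a bounded integrand. The reflection `x ↦ 1 − x` preserves `V` and
exchanges `ρ₀` and `ρ₁`, so only the endpoint `0` has to be examined.
-/

/-- Condition (V2): `∫₀^y V(x)(ρ(x)−ρ(0))² dx + ∫_{1−y}^1 V(x)(ρ(x)−ρ(1))² dx → 0` as `y → 0+`.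
The integrals are Lebesgue integrals in `[0, ∞]`, so that a divergent one does not count as `0`. -/
def CondV2 (V ρ : ℝ → ℝ) : Prop :=
  Tendsto
    (fun y : ℝ =>
      (∫⁻ x in Ioo (0 : ℝ) y, ENNReal.ofReal (V x * (ρ x - ρ 0) ^ 2)) +
        ∫⁻ x in Ioo (1 - y) (1 : ℝ), ENNReal.ofReal (V x * (ρ x - ρ 1) ^ 2))
    (𝓝[>] (0 : ℝ)) (𝓝 0)

/-- The relaxation strength `V(x) = x^{−γ} + (1−x)^{−γ}` of the example, meaningful on `(0, 1)`. -/
noncomputable def relaxationStrength (γ x : ℝ) : ℝ :=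
  x ^ (-γ) + (1 - x) ^ (-γ)

/-- The reservoir profile `ρ` of the example, the average of `ρ₀` and `ρ₁` with weights
proportional to `(1−x)^γ` and `x^γ`, on `[0, 1]`. -/
noncomputable def reservoirProfile (γ ρ₀ ρ₁ x : ℝ) : ℝ :=
  (ρ₀ * (1 - x) ^ γ + ρ₁ * x ^ γ) / ((1 - x) ^ γ + x ^ γ)

theorem setLIntegral_Ioo_sub_self_left (f : ℝ → ENNReal) (c y : ℝ) :
    ∫⁻ x in Ioo (c - y) c, f x = ∫⁻ x in Ioo 0 y, f (c - x) := by
  have hpre : (fun x : ℝ => c - x) ⁻¹' Ioo (c - y) c = Ioo 0 y := by simp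
  rw [← hpre, (Measure.measurePreserving_sub_left volume c).setLIntegral_comp_preimage_emb
    (MeasurableEquiv.subLeft c).measurableEmbedding]

theorem exists_eventually_setLIntegral_Ioo_le_mul_pow {f : ℝ → ℝ} {k : ℕ}
    (hf : f =O[𝓝[>] 0] fun x => x ^ k) :
    ∃ C, ∀ᶠ y in 𝓝[>] (0 : ℝ),
      ∫⁻ x in Ioo 0 y, ENNReal.ofReal (f x) ≤ ENNReal.ofReal (C * y ^ (k + 1)) := by
  obtain ⟨C, hC, hbound⟩ := hf.exists_nonneg
  obtain ⟨u, hu, hfu⟩ := mem_nhdsGT_iff_exists_Ioo_subset.mp hbound.bound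
  refine ⟨C, ?_⟩
  filter_upwards [Ioo_mem_nhdsGT hu] with y ⟨hy, hyu⟩
  have hfy : ∀ x ∈ Ioo 0 y, f x ≤ C * y ^ k := fun x ⟨hx, hxy⟩ =>
    calc f x ≤ ‖f x‖ := Real.le_norm_self _
      _ ≤ C * ‖x ^ k‖ := hfu ⟨hx, hxy.trans hyu⟩
      _ = C * x ^ k := by rw [Real.norm_of_nonneg (by positivity)]
      _ ≤ C * y ^ k := by gcongr
  calc ∫⁻ x in Ioo 0 y, ENNReal.ofReal (f x)
      ≤ ∫⁻ _ in Ioo 0 y, ENNReal.ofReal (C * y ^ k) :=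
        setLIntegral_mono measurable_const fun x hx => ENNReal.ofReal_le_ofReal (hfy x hx)
    _ = ENNReal.ofReal (C * y ^ (k + 1)) := by
        rw [setLIntegral_const, Real.volume_Ioo, sub_zero, ← ENNReal.ofReal_mul (by positivity),
          mul_assoc, ← pow_succ]

theorem tendsto_setLIntegral_Ioo_zero_of_isBigO_one {f : ℝ → ℝ}
    (hf : f =O[𝓝[>] 0] fun _ => (1 : ℝ)) :
    Tendsto (fun y => ∫⁻ x in Ioo 0 y, ENNReal.ofReal (f x)) (𝓝[>] 0) (𝓝 0) := by
  obtain ⟨C, hC⟩ := exists_eventually_setLIntegral_Ioo_le_mul_pow (k := 0)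
    (by simpa only [pow_zero] using hf)
  have hlim : Tendsto (fun y : ℝ => ENNReal.ofReal (C * y ^ (0 + 1))) (𝓝[>] 0) (𝓝 0) := by
    have hcont : Continuous fun y : ℝ => ENNReal.ofReal (C * y ^ (0 + 1)) :=
      ENNReal.continuous_ofReal.comp (by fun_prop)
    simpa using (hcont.tendsto 0).mono_left nhdsWithin_le_nhds
  exact tendsto_of_tendsto_of_tendsto_of_le_of_le' tendsto_const_nhds hlim
    (Eventually.of_forall fun _ => zero_le) hC

theorem condV1_of_isBigO {V : ℝ → ℝ}
    (hV : (fun x => 1 / V x + 1 / V (1 - x)) =O[𝓝[>] 0] fun x => x) :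
    CondV1 V := by
  obtain ⟨C, hC⟩ := exists_eventually_setLIntegral_Ioo_le_mul_pow (k := 1)
    (by simpa only [pow_one] using hV)
  refine (limsup_le_of_le (a := ENNReal.ofReal C) (by isBoundedDefault) ?_).trans_lt
    ENNReal.ofReal_lt_top
  filter_upwards [hC, self_mem_nhdsWithin] with y hCy (hy : 0 < y)
  calc _ ≤ ENNReal.ofReal (1 / y ^ 2) * ENNReal.ofReal (C * y ^ 2) := by gcongr
    _ = ENNReal.ofReal C := by
        rw [← ENNReal.ofReal_mul (by positivity)]
        congr 1
        field_simp

theorem condV2_of_isBigO_one {V ρ : ℝ → ℝ}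
    (h₀ : (fun x => V x * (ρ x - ρ 0) ^ 2) =O[𝓝[>] 0] fun _ => (1 : ℝ))
    (h₁ : (fun x => V (1 - x) * (ρ (1 - x) - ρ 1) ^ 2) =O[𝓝[>] 0] fun _ => (1 : ℝ)) :
    CondV2 V ρ := by
  simpa only [CondV2, setLIntegral_Ioo_sub_self_left, add_zero] using
    (tendsto_setLIntegral_Ioo_zero_of_isBigO_one h₀).add
      (tendsto_setLIntegral_Ioo_zero_of_isBigO_one h₁)

section ExampleProfile

variable {γ x : ℝ}

theorem relaxationStrength_one_sub (γ x : ℝ) :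
    relaxationStrength γ (1 - x) = relaxationStrength γ x := by
  simp only [relaxationStrength, sub_sub_cancel, add_comm]

theorem reservoirProfile_one_sub (γ ρ₀ ρ₁ x : ℝ) :
    reservoirProfile γ ρ₀ ρ₁ (1 - x) = reservoirProfile γ ρ₁ ρ₀ x := by
  simp only [reservoirProfile, sub_sub_cancel, add_comm]

theorem reservoirProfile_zero (hγ : γ ≠ 0) (ρ₀ ρ₁ : ℝ) : reservoirProfile γ ρ₀ ρ₁ 0 = ρ₀ := by
  simp [reservoirProfile, Real.zero_rpow hγ]

theorem reservoirProfile_one (hγ : γ ≠ 0) (ρ₀ ρ₁ : ℝ) : reservoirProfile γ ρ₀ ρ₁ 1 = ρ₁ := by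
  simp [reservoirProfile, Real.zero_rpow hγ]

theorem one_div_relaxationStrength_le_rpow (γ : ℝ) (hx : x ∈ Ioo (0 : ℝ) 1) :
    1 / relaxationStrength γ x ≤ x ^ γ := by
  obtain ⟨hx₀, hx₁⟩ := hx
  have hV : x ^ (-γ) ≤ relaxationStrength γ x :=
    le_add_of_nonneg_right (Real.rpow_nonneg (sub_nonneg.mpr hx₁.le) _)
  calc 1 / relaxationStrength γ x ≤ 1 / x ^ (-γ) := one_div_le_one_div_of_le (by positivity) hV
    _ = x ^ γ := by rw [Real.rpow_neg hx₀.le, one_div, inv_inv]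

theorem one_div_relaxationStrength_isBigO (hγ : 1 ≤ γ) :
    (fun x => 1 / relaxationStrength γ x) =O[𝓝[>] 0] fun x => x := by
  refine IsBigO.of_bound' ?_
  filter_upwards [Ioo_mem_nhdsGT one_pos] with x hx
  have hV : 0 ≤ relaxationStrength γ x :=
    add_nonneg (Real.rpow_nonneg hx.1.le _) (Real.rpow_nonneg (sub_nonneg.mpr hx.2.le) _)
  rw [Real.norm_of_nonneg (one_div_nonneg.mpr hV), Real.norm_of_nonneg hx.1.le]
  exact (one_div_relaxationStrength_le_rpow γ hx).trans
    (Real.rpow_le_self_of_le_one hx.1.le hx.2.le hγ)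

/-- Combine `ρ − ρ₀ = (ρ₁ − ρ₀) x^γ / ((1−x)^γ + x^γ)` with
`V = ((1−x)^γ + x^γ) / (x^γ (1−x)^γ)`. -/
theorem relaxationStrength_mul_reservoirProfile_sub_sq (γ ρ₀ ρ₁ : ℝ) (hx : x ∈ Ioo (0 : ℝ) 1) :
    relaxationStrength γ x * (reservoirProfile γ ρ₀ ρ₁ x - ρ₀) ^ 2 =
      (ρ₁ - ρ₀) ^ 2 * x ^ γ / ((1 - x) ^ γ * ((1 - x) ^ γ + x ^ γ)) := by
  have hx₁ : 0 < 1 - x := sub_pos.mpr hx.2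
  have ha : x ^ γ ≠ 0 := (Real.rpow_pos_of_pos hx.1 γ).ne'
  have hb : (1 - x) ^ γ ≠ 0 := (Real.rpow_pos_of_pos hx₁ γ).ne'
  have hab : (1 - x) ^ γ + x ^ γ ≠ 0 :=
    (add_pos (Real.rpow_pos_of_pos hx₁ γ) (Real.rpow_pos_of_pos hx.1 γ)).ne'
  rw [relaxationStrength, reservoirProfile, Real.rpow_neg hx.1.le, Real.rpow_neg hx₁.le]
  field_simp [ha, hb, hab]
  ring

theorem relaxationStrength_mul_reservoirProfile_sub_sq_isBigO_one (hγ : 0 < γ) (ρ₀ ρ₁ : ℝ) :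
    (fun x => relaxationStrength γ x * (reservoirProfile γ ρ₀ ρ₁ x - ρ₀) ^ 2)
      =O[𝓝[>] 0] fun _ => (1 : ℝ) := by
  have hcont : ContinuousAt
      (fun x : ℝ => (ρ₁ - ρ₀) ^ 2 * x ^ γ / ((1 - x) ^ γ * ((1 - x) ^ γ + x ^ γ))) 0 := by
    have ha : ContinuousAt (fun x : ℝ => x ^ γ) 0 := Real.continuousAt_rpow_const _ _ (.inr hγ.le)
    have hb : ContinuousAt (fun x : ℝ => (1 - x) ^ γ) 0 :=
      (continuousAt_const.sub continuousAt_id).rpow_const (.inr hγ.le)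
    exact (continuousAt_const.mul ha).div (hb.mul (hb.add ha)) (by simp [Real.zero_rpow hγ.ne'])
  refine ((hcont.tendsto.mono_left nhdsWithin_le_nhds).isBigO_one ℝ).congr' ?_ .rfl
  filter_upwards [Ioo_mem_nhdsGT one_pos] with x hx
  exact (relaxationStrength_mul_reservoirProfile_sub_sq γ ρ₀ ρ₁ hx).symm

theorem condV1_relaxationStrength (hγ : 1 ≤ γ) : CondV1 (relaxationStrength γ) := by
  refine condV1_of_isBigO ?_
  simp only [relaxationStrength_one_sub]
  exact (one_div_relaxationStrength_isBigO hγ).add (one_div_relaxationStrength_isBigO hγ)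

theorem condV2_relaxationStrength_reservoirProfile (hγ : 0 < γ) (ρ₀ ρ₁ : ℝ) :
    CondV2 (relaxationStrength γ) (reservoirProfile γ ρ₀ ρ₁) := by
  apply condV2_of_isBigO_one
  · rw [reservoirProfile_zero hγ.ne']
    exact relaxationStrength_mul_reservoirProfile_sub_sq_isBigO_one hγ ρ₀ ρ₁
  · simp only [relaxationStrength_one_sub, reservoirProfile_one_sub, reservoirProfile_one hγ.ne']
    exact relaxationStrength_mul_reservoirProfile_sub_sq_isBigO_one hγ ρ₁ ρ₀

end ExampleProfile

theorem example_profile_satisfies_V1_V2_general {γ : ℝ} (hγ : 1 ≤ γ) (ρ₀ ρ₁ : ℝ) :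
    CondV1 (relaxationStrength γ) ∧ CondV2 (relaxationStrength γ) (reservoirProfile γ ρ₀ ρ₁) :=
  ⟨condV1_relaxationStrength hγ,
    condV2_relaxationStrength_reservoirProfile (one_pos.trans_le hγ) ρ₀ ρ₁⟩

/-- for `γ ≥ 1` and `ρ₀, ρ₁ ∈ (0,1)`, the profiles
`V(x) = x^{−γ} + (1−x)^{−γ}` and
`ρ(x) = (ρ₀(1−x)^γ + ρ₁ x^γ)/((1−x)^γ + x^γ)` satisfy Conditions (V1) and (V2)
(with boundary values `ρ₀` and `ρ₁`). -/
theorem example_profile_satisfies_V1_V2 (γ : ℝ) (hγ : 1 ≤ γ)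
    (ρ₀ ρ₁ : ℝ) (h0 : ρ₀ ∈ Ioo (0 : ℝ) 1) (h1 : ρ₁ ∈ Ioo (0 : ℝ) 1) :
    CondV1 (fun x : ℝ => x ^ (-γ) + (1 - x) ^ (-γ)) ∧
    Filter.Tendsto
      (fun y : ℝ =>
        (∫⁻ x in Ioo (0 : ℝ) y,
          ENNReal.ofReal ((x ^ (-γ) + (1 - x) ^ (-γ)) *
            ((ρ₀ * (1 - x) ^ γ + ρ₁ * x ^ γ) / ((1 - x) ^ γ + x ^ γ) - ρ₀) ^ 2)) +
        ∫⁻ x in Ioo (1 - y) (1 : ℝ),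
          ENNReal.ofReal ((x ^ (-γ) + (1 - x) ^ (-γ)) *
            ((ρ₀ * (1 - x) ^ γ + ρ₁ * x ^ γ) / ((1 - x) ^ γ + x ^ γ) - ρ₁) ^ 2))
      (𝓝[>] (0 : ℝ)) (𝓝 0) := by
  have hγ₀ : γ ≠ 0 := (one_pos.trans_le hγ).ne'
  simpa only [CondV2, reservoirProfile_zero hγ₀, reservoirProfile_one hγ₀] using!
    example_profile_satisfies_V1_V2_general hγ ρ₀ ρ₁
end

section
/- Let N ≥ 1, p ∈ (1/2,1], σ ≥ 0, let ν = ν_{1/2}^N be the uniform measure on Ω_N, and let f : Ω_N → (0,∞) be a probability density with respect to ν (Σ_η f(η)ν(η) = 1), with μ = fν. Then ⟨f, L_exc[log f]⟩_ν ≤ −(σ+1) D_exc^N(μ;ν) + (2p−1). -/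
open Finset

/-- The space of particle configurations on `{0,1,…,N}`. -/
abbrev Cfg (N : ℕ) := Fin (N + 1) → Bool

/-- The real value (`0` or `1`) of an occupation variable. -/
def ind (b : Bool) : ℝ := if b then 1 else 0

/-- The configuration obtained by swapping the values at sites `i` and `i+1`. -/
def swap {N : ℕ} (i : Fin N) (η : Cfg N) : Cfg N :=
  fun k => if k = i.castSucc then η i.succ else if k = i.succ then η i.castSucc else η k

/-- The exclusion jump rate `c_{i,i+1}(η) = p η_i(1−η_{i+1}) + (1−p) η_{i+1}(1−η_i)`. -/
noncomputable def cExc (p : ℝ) {N : ℕ} (i : Fin N) (η : Cfg N) : ℝ :=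
  p * ind (η i.castSucc) * (1 - ind (η i.succ)) +
    (1 - p) * ind (η i.succ) * (1 - ind (η i.castSucc))

/-- The exclusion generator
`L_exc g(η) = Σ_{i=0}^{N−1} (c_{i,i+1}(η) + σ/2)[g(η^{i,i+1}) − g(η)]`. -/
noncomputable def Lexc (p σ : ℝ) {N : ℕ} (g : Cfg N → ℝ) (η : Cfg N) : ℝ :=
  ∑ i : Fin N, (cExc p i η + σ / 2) * (g (swap i η) - g η)

/-- The uniform (product Bernoulli(1/2)) probability measure on `Cfg N`. -/
noncomputable def nuHalf (N : ℕ) (_η : Cfg N) : ℝ := (1 / 2) ^ (N + 1)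

/-- The exclusion Dirichlet form
`D_exc^N(μ;ν) = (1/2) Σ_η Σ_{i=0}^{N−1} (√(f(η^{i,i+1})) − √(f(η)))² ν(η)`,
where `f = dμ/dν`. -/
noncomputable def Dexc (N : ℕ) (f ν : Cfg N → ℝ) : ℝ :=
  (1 / 2) * ∑ η : Cfg N, ∑ i : Fin N,
    (Real.sqrt (f (swap i η)) - Real.sqrt (f η)) ^ 2 * ν η

/-!
The generator moves a particle from `i` to `i + 1` at rate `p + σ / 2` and back at rate
`1 - p + σ / 2`; these rates add up to `σ + 1` and differ by `2p - 1`. The inequality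
`a (log b - log a) ≤ b - a - (√b - √a)²` splits the entropy production of each bond in two.
Summed against a measure invariant under the swap, the squares only see the mean of the two rates
and give the Dirichlet form, while the linear part only sees their difference and gives
`(2p - 1) (η_{i+1} - η_i)`. The latter telescopes over the bonds to the boundary term
`(2p - 1) (η_N - η_0)`, which is at most `|2p - 1|`.
-/

open Real

theorem mul_log_sub_log_le {a b : ℝ} (ha : 0 < a) (hb : 0 < b) :
    a * (log b - log a) ≤ b - a - (√b - √a) ^ 2 := by
  have hlog : log b - log a = 2 * log (√b / √a) := by
    rw [log_div (by positivity) (by positivity), log_sqrt hb.le, log_sqrt ha.le]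
    ring
  calc a * (log b - log a) = 2 * a * log (√b / √a) := by rw [hlog]; ring
    _ ≤ 2 * a * (√b / √a - 1) := by gcongr; exact log_le_sub_one_of_pos (by positivity)
    _ = 2 * √b * (a / √a) - 2 * a := by ring
    _ = b - a - (√b - √a) ^ 2 := by
      rw [div_sqrt]
      linear_combination sq_sqrt ha.le + sq_sqrt hb.le

section Involution

variable {α R : Type*} [Fintype α] {e : α → α}

theorem two_mul_sum_mul_of_involutive [NonAssocSemiring R] (he : e.Involutive) (r : α → R)
    {g : α → R} (hg : ∀ x, g (e x) = g x) :
    2 * ∑ x, r x * g x = ∑ x, (r x + r (e x)) * g x := by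
  have hswap : ∑ x, r (e x) * g x = ∑ x, r x * g x := by
    simpa only [hg] using he.bijective.sum_comp fun x => r x * g x
  simp only [add_mul, sum_add_distrib, hswap, two_mul]

theorem sum_mul_comp_sub_of_involutive [NonUnitalNonAssocRing R] (he : e.Involutive)
    (r f : α → R) {w : α → R} (hw : ∀ x, w (e x) = w x) :
    ∑ x, r x * (f (e x) - f x) * w x = ∑ x, (r (e x) - r x) * f x * w x := by
  have hswap : ∑ x, r x * f (e x) * w x = ∑ x, r (e x) * f x * w x := by
    simpa only [he _, hw] using (he.bijective.sum_comp fun x => r x * f (e x) * w x).symm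
  simp only [mul_sub, sub_mul, sum_sub_distrib, hswap]

end Involution

theorem sum_fin_succ_sub_castSucc {M : Type*} [AddCommGroup M] {n : ℕ} (g : Fin (n + 1) → M) :
    ∑ i : Fin n, (g i.succ - g i.castSucc) = g (Fin.last n) - g 0 := by
  have hsplit : g 0 + ∑ i : Fin n, g i.succ = ∑ i : Fin n, g i.castSucc + g (Fin.last n) :=
    (Fin.sum_univ_succ g).symm.trans (Fin.sum_univ_castSucc g)
  rw [sum_sub_distrib, sub_eq_sub_iff_add_eq_add, add_comm, hsplit, add_comm]

theorem abs_ind_sub_ind_le_one (a b : Bool) : |ind a - ind b| ≤ 1 := by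
  cases a <;> cases b <;> norm_num [ind]

section Bond

variable {N : ℕ} (i : Fin N) (η : Cfg N)

theorem swap_eq_comp_equivSwap : swap i η = η ∘ Equiv.swap i.castSucc i.succ := by
  ext k
  simp only [swap, Function.comp_apply, Equiv.swap_apply_def]
  split_ifs <;> rfl

theorem swap_involutive : Function.Involutive (swap i) := fun η => by
  ext k
  simp [swap_eq_comp_equivSwap]

theorem swap_apply_castSucc : swap i η i.castSucc = η i.succ := by
  simp [swap_eq_comp_equivSwap]

theorem swap_apply_succ : swap i η i.succ = η i.castSucc := by
  simp [swap_eq_comp_equivSwap]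

theorem cExc_swap_sub (p : ℝ) :
    cExc p i (swap i η) - cExc p i η = (2 * p - 1) * (ind (η i.succ) - ind (η i.castSucc)) := by
  simp only [cExc, swap_apply_castSucc, swap_apply_succ]
  ring

variable {i η}

theorem swap_eq_self (h : η i.castSucc = η i.succ) : swap i η = η := by
  ext k
  simp only [swap]
  split_ifs with hk hk <;> simp [hk, h]

theorem cExc_add_swap (p : ℝ) (h : η i.castSucc ≠ η i.succ) :
    cExc p i η + cExc p i (swap i η) = 1 := by
  simp only [cExc, swap_apply_castSucc, swap_apply_succ]
  cases hl : η i.castSucc <;> cases hr : η i.succ <;> simp_all [ind]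

theorem cExc_eq_or_eq (p : ℝ) (h : η i.castSucc ≠ η i.succ) :
    cExc p i η = p ∨ cExc p i η = 1 - p := by
  cases hl : η i.castSucc <;> cases hr : η i.succ <;> simp_all [cExc, ind]

end Bond

section EntropyProduction

variable {N : ℕ} {p σ : ℝ} {f ν : Cfg N → ℝ}

theorem mul_rate_mul_log_sub_log_le (hright : 0 ≤ p + σ / 2) (hleft : 0 ≤ 1 - p + σ / 2)
    (hf : ∀ η, 0 < f η) (i : Fin N) (η : Cfg N) :
    f η * ((cExc p i η + σ / 2) * (log (f (swap i η)) - log (f η))) ≤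
      (cExc p i η + σ / 2) * (f (swap i η) - f η - (√(f (swap i η)) - √(f η)) ^ 2) := by
  by_cases h : η i.castSucc = η i.succ
  · simp [swap_eq_self h]
  · have hrate : 0 ≤ cExc p i η + σ / 2 := by
      rcases cExc_eq_or_eq p h with hc | hc <;> rwa [hc]
    rw [mul_left_comm]
    exact mul_le_mul_of_nonneg_left (mul_log_sub_log_le (hf _) (hf _)) hrate

theorem sum_rate_mul_sqrt_sub_sq (p σ : ℝ) (f : Cfg N → ℝ) {i : Fin N}
    (hνswap : ∀ η, ν (swap i η) = ν η) :
    ∑ η, (cExc p i η + σ / 2) * ((√(f (swap i η)) - √(f η)) ^ 2 * ν η) =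
      (σ + 1) / 2 * ∑ η, (√(f (swap i η)) - √(f η)) ^ 2 * ν η := by
  have hsymm : ∀ η, (√(f (swap i (swap i η))) - √(f (swap i η))) ^ 2 * ν (swap i η) =
      (√(f (swap i η)) - √(f η)) ^ 2 * ν η := fun η => by
    rw [swap_involutive i η, hνswap, sub_sq_comm]
  have hrates : ∀ η, (cExc p i η + σ / 2 + (cExc p i (swap i η) + σ / 2)) *
      ((√(f (swap i η)) - √(f η)) ^ 2 * ν η) =
        (σ + 1) * ((√(f (swap i η)) - √(f η)) ^ 2 * ν η) := fun η => by
    by_cases h : η i.castSucc = η i.succ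
    · simp [swap_eq_self h]
    · congr 1
      linear_combination cExc_add_swap p h
  have htwice := two_mul_sum_mul_of_involutive (swap_involutive i)
    (fun η => cExc p i η + σ / 2) (g := fun η => (√(f (swap i η)) - √(f η)) ^ 2 * ν η) hsymm
  simp only [hrates, ← mul_sum] at htwice
  linear_combination htwice / 2

theorem sum_rate_mul_swap_sub (p σ : ℝ) (f : Cfg N → ℝ) {i : Fin N}
    (hνswap : ∀ η, ν (swap i η) = ν η) :
    ∑ η, (cExc p i η + σ / 2) * (f (swap i η) - f η) * ν η =
      (2 * p - 1) * ∑ η, f η * (ind (η i.succ) - ind (η i.castSucc)) * ν η := by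
  rw [sum_mul_comp_sub_of_involutive (swap_involutive i) _ f hνswap, mul_sum]
  refine sum_congr rfl fun η _ => ?_
  rw [add_sub_add_right_eq_sub, cExc_swap_sub]
  ring

theorem bond_entropy_production_le (hright : 0 ≤ p + σ / 2) (hleft : 0 ≤ 1 - p + σ / 2)
    (hf : ∀ η, 0 < f η) (hν : ∀ η, 0 ≤ ν η) {i : Fin N} (hνswap : ∀ η, ν (swap i η) = ν η) :
    ∑ η, f η * ((cExc p i η + σ / 2) * (log (f (swap i η)) - log (f η))) * ν η ≤
      -((σ + 1) / 2) * ∑ η, (√(f (swap i η)) - √(f η)) ^ 2 * ν η +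
        (2 * p - 1) * ∑ η, f η * (ind (η i.succ) - ind (η i.castSucc)) * ν η := by
  calc
    _ ≤ ∑ η, (cExc p i η + σ / 2) *
          (f (swap i η) - f η - (√(f (swap i η)) - √(f η)) ^ 2) * ν η :=
      sum_le_sum fun η _ => mul_le_mul_of_nonneg_right
        (mul_rate_mul_log_sub_log_le hright hleft hf i η) (hν η)
    _ = ∑ η, (cExc p i η + σ / 2) * (f (swap i η) - f η) * ν η -
          ∑ η, (cExc p i η + σ / 2) * ((√(f (swap i η)) - √(f η)) ^ 2 * ν η) := by
      simp only [mul_sub, sub_mul, sum_sub_distrib, mul_assoc]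
    _ = _ := by
      rw [sum_rate_mul_swap_sub p σ f hνswap, sum_rate_mul_sqrt_sub_sq p σ f hνswap]
      ring

theorem sum_bond_gradient_eq_boundary_gradient (f ν : Cfg N → ℝ) :
    ∑ i : Fin N, ∑ η, f η * (ind (η i.succ) - ind (η i.castSucc)) * ν η =
      ∑ η, f η * (ind (η (Fin.last N)) - ind (η 0)) * ν η := by
  rw [sum_comm]
  refine sum_congr rfl fun η _ => ?_
  rw [← sum_mul, ← mul_sum, sum_fin_succ_sub_castSucc fun k => ind (η k)]

theorem entropy_production_le_boundary (hright : 0 ≤ p + σ / 2) (hleft : 0 ≤ 1 - p + σ / 2)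
    (hf : ∀ η, 0 < f η) (hν : ∀ η, 0 ≤ ν η) (hνswap : ∀ i η, ν (swap i η) = ν η) :
    ∑ η, f η * Lexc p σ (fun ζ => log (f ζ)) η * ν η ≤
      -(σ + 1) * Dexc N f ν +
        (2 * p - 1) * ∑ η, f η * (ind (η (Fin.last N)) - ind (η 0)) * ν η := by
  calc
    _ = ∑ i : Fin N, ∑ η, f η *
          ((cExc p i η + σ / 2) * (log (f (swap i η)) - log (f η))) * ν η := by
      simp only [Lexc, mul_sum, sum_mul]
      exact sum_comm
    _ ≤ ∑ i : Fin N, (-((σ + 1) / 2) * ∑ η, (√(f (swap i η)) - √(f η)) ^ 2 * ν η +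
          (2 * p - 1) * ∑ η, f η * (ind (η i.succ) - ind (η i.castSucc)) * ν η) :=
      sum_le_sum fun i _ => bond_entropy_production_le hright hleft hf hν (hνswap i)
    _ = _ := by
      rw [sum_add_distrib, ← mul_sum, ← mul_sum, sum_bond_gradient_eq_boundary_gradient,
        sum_comm, Dexc]
      ring

theorem mul_sum_boundary_gradient_le (p : ℝ) (hf : ∀ η, 0 ≤ f η) (hν : ∀ η, 0 ≤ ν η) :
    (2 * p - 1) * ∑ η, f η * (ind (η (Fin.last N)) - ind (η 0)) * ν η ≤
      |2 * p - 1| * ∑ η, f η * ν η := by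
  rw [mul_sum, mul_sum]
  refine sum_le_sum fun η _ => ?_
  have hbdry : (2 * p - 1) * (ind (η (Fin.last N)) - ind (η 0)) ≤ |2 * p - 1| :=
    calc _ ≤ |2 * p - 1| * |ind (η (Fin.last N)) - ind (η 0)| :=
          (le_abs_self _).trans_eq (abs_mul _ _)
      _ ≤ |2 * p - 1| := mul_le_of_le_one_right (abs_nonneg _) (abs_ind_sub_ind_le_one _ _)
  calc _ = (2 * p - 1) * (ind (η (Fin.last N)) - ind (η 0)) * (f η * ν η) := by ring
    _ ≤ |2 * p - 1| * (f η * ν η) := mul_le_mul_of_nonneg_right hbdry (mul_nonneg (hf η) (hν η))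

end EntropyProduction

theorem exclusion_entropy_production_bound_general {N : ℕ} {p σ : ℝ} {f ν : Cfg N → ℝ}
    (hright : 0 ≤ p + σ / 2) (hleft : 0 ≤ 1 - p + σ / 2)
    (hf : ∀ η, 0 < f η) (hν : ∀ η, 0 ≤ ν η) (hνswap : ∀ i η, ν (swap i η) = ν η) :
    ∑ η, f η * Lexc p σ (fun ζ => log (f ζ)) η * ν η ≤
      -(σ + 1) * Dexc N f ν + |2 * p - 1| * ∑ η, f η * ν η :=
  (entropy_production_le_boundary hright hleft hf hν hνswap).trans <|
    add_le_add_right (mul_sum_boundary_gradient_le p (fun η => (hf η).le) hν) _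

/-- `⟨f, L_exc[log f]⟩_ν ≤ −(σ+1) D_exc^N(μ;ν) + (2p−1)` for the
uniform reference measure `ν = ν_{1/2}^N`. -/
theorem exclusion_entropy_production_bound (N : ℕ) (hN : 1 ≤ N)
    (p : ℝ) (hp : p ∈ Set.Ioc (1 / 2 : ℝ) 1) (σ : ℝ) (hσ : 0 ≤ σ)
    (f : Cfg N → ℝ) (hf : ∀ η, 0 < f η)
    (hf1 : ∑ η : Cfg N, f η * nuHalf N η = 1) :
    ∑ η : Cfg N, f η * Lexc p σ (fun ζ => Real.log (f ζ)) η * nuHalf N η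
      ≤ -(σ + 1) * Dexc N f (nuHalf N) + (2 * p - 1) := by
  obtain ⟨hp_half, hp_one⟩ := hp
  have hbound := exclusion_entropy_production_bound_general (p := p) (σ := σ) (ν := nuHalf N)
    (by linarith) (by linarith) hf (fun _ => by unfold nuHalf; positivity) (fun _ _ => rfl)
  rwa [hf1, mul_one, abs_of_pos (by linarith)] at hbound
end

section
/- Let N ≥ 1, let c_in^−, c_out^−, c_in^+, c_out^+ ≥ 0, let ν = ν_{1/2}^N be the uniform measure on Ω_N, and let f : Ω_N → (0,∞) be a probability density with respect to ν, with μ = fν. Then ⟨f, L_bd[log f]⟩_ν ≤ −2[D_−^N(μ;ν) + D_+^N(μ;ν)] + |c_out^− − c_in^−| + |c_out^+ − c_in^+|. -/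
open Finset

/-- The configuration obtained by flipping the value at site `i`. -/
def flipCfg {N : ℕ} (i : Fin (N + 1)) (η : Cfg N) : Cfg N :=
  Function.update η i (!(η i))

/-- The left boundary rate `c_0(η) = c_in^−(1−η_0) + c_out^− η_0`. -/
noncomputable def cLeft {N : ℕ} (cin cout : ℝ) (η : Cfg N) : ℝ :=
  cin * (1 - ind (η 0)) + cout * ind (η 0)

/-- The right boundary rate `c_N(η) = c_in^+(1−η_N) + c_out^+ η_N`. -/
noncomputable def cRight {N : ℕ} (cin cout : ℝ) (η : Cfg N) : ℝ :=
  cin * (1 - ind (η (Fin.last N))) + cout * ind (η (Fin.last N))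

/-- The boundary generator
`L_bd g(η) = c_0(η)[g(η^0) − g(η)] + c_N(η)[g(η^N) − g(η)]`. -/
noncomputable def Lbd {N : ℕ} (cinL coutL cinR coutR : ℝ) (g : Cfg N → ℝ) (η : Cfg N) : ℝ :=
  cLeft cinL coutL η * (g (flipCfg 0 η) - g η) +
    cRight cinR coutR η * (g (flipCfg (Fin.last N) η) - g η)

/-- The left boundary Dirichlet form
`D_−^N(μ;ν) = (1/2) Σ_η c_0(η)(√(f(η^0)) − √(f(η)))² ν(η)`. -/
noncomputable def Dminus (N : ℕ) (cin cout : ℝ) (f ν : Cfg N → ℝ) : ℝ :=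
  (1 / 2) * ∑ η : Cfg N,
    cLeft cin cout η * (Real.sqrt (f (flipCfg 0 η)) - Real.sqrt (f η)) ^ 2 * ν η

/-- The right boundary Dirichlet form
`D_+^N(μ;ν) = (1/2) Σ_η c_N(η)(√(f(η^N)) − √(f(η)))² ν(η)`. -/
noncomputable def Dplus (N : ℕ) (cin cout : ℝ) (f ν : Cfg N → ℝ) : ℝ :=
  (1 / 2) * ∑ η : Cfg N,
    cRight cin cout η * (Real.sqrt (f (flipCfg (Fin.last N) η)) - Real.sqrt (f η)) ^ 2 * ν η

/-!
Writing `log b - log a = 2 log (√b / √a)` and using `log t ≤ t - 1` gives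
`a (log b - log a) ≤ (b - a) - (√b - √a) ^ 2`. Summed against the flip rate `c` of a boundary site,
the square produces the Dirichlet form. Since the flip preserves `ν`, the linear term moves the
difference onto the rates, where it is at most `|c_out - c_in|` times the mass of `f`.
-/

open Real

section MeasurePreservingPerm

variable {α : Type*} [Fintype α] {σ : Equiv.Perm α} {c f ν : α → ℝ} {K : ℝ}

theorem sum_rate_mul_sub_mul_le (hν : ∀ x, 0 ≤ ν x) (hνσ : ∀ x, ν (σ x) = ν x)
    (hcK : ∀ x, c x - c (σ x) ≤ K) (hf : ∀ x, 0 ≤ f x) :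
    ∑ x, c x * (f (σ x) - f x) * ν x ≤ K * ∑ x, f x * ν x := by
  have hreindex : ∑ x, c x * (f x * ν x) = ∑ x, c (σ x) * (f (σ x) * ν x) := by
    rw [← Equiv.sum_comp σ]
    simp only [hνσ]
  calc ∑ x, c x * (f (σ x) - f x) * ν x
      = ∑ x, (c x - c (σ x)) * (f (σ x) * ν x) := by
        simp only [mul_sub, sub_mul, mul_assoc, sum_sub_distrib]
        rw [hreindex]
    _ ≤ ∑ x, K * (f (σ x) * ν x) :=
        sum_le_sum fun x _ => mul_le_mul_of_nonneg_right (hcK x) (mul_nonneg (hf _) (hν x))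
    _ = K * ∑ x, f x * ν x := by
        rw [← mul_sum, ← Equiv.sum_comp σ (fun x => f x * ν x)]
        simp only [hνσ]

theorem sum_mul_rate_mul_log_sub_log_le (hν : ∀ x, 0 ≤ ν x) (hνσ : ∀ x, ν (σ x) = ν x)
    (hc : ∀ x, 0 ≤ c x) (hcK : ∀ x, c x - c (σ x) ≤ K) (hf : ∀ x, 0 < f x) :
    ∑ x, f x * (c x * (log (f (σ x)) - log (f x))) * ν x
      ≤ -∑ x, c x * (√(f (σ x)) - √(f x)) ^ 2 * ν x + K * ∑ x, f x * ν x := by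
  calc ∑ x, f x * (c x * (log (f (σ x)) - log (f x))) * ν x
      = ∑ x, c x * ν x * (f x * (log (f (σ x)) - log (f x))) :=
        sum_congr rfl fun x _ => by ring
    _ ≤ ∑ x, c x * ν x * (f (σ x) - f x - (√(f (σ x)) - √(f x)) ^ 2) :=
        sum_le_sum fun x _ =>
          mul_le_mul_of_nonneg_left (mul_log_sub_log_le (hf x) (hf _)) (mul_nonneg (hc x) (hν x))
    _ = -∑ x, c x * (√(f (σ x)) - √(f x)) ^ 2 * ν x + ∑ x, c x * (f (σ x) - f x) * ν x := by
        rw [← sum_neg_distrib, ← sum_add_distrib]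
        exact sum_congr rfl fun x _ => by ring
    _ ≤ -∑ x, c x * (√(f (σ x)) - √(f x)) ^ 2 * ν x + K * ∑ x, f x * ν x := by
        gcongr
        exact sum_rate_mul_sub_mul_le hν hνσ hcK fun x => (hf x).le

end MeasurePreservingPerm

section Site

variable {N : ℕ} (i : Fin (N + 1)) (cin cout : ℝ)

/-- The rate at which site `i` flips when it exchanges particles with a reservoir that creates them
at rate `cin` and annihilates them at rate `cout`. The rates `cLeft` and `cRight` are the instances
`i = 0` and `i = Fin.last N`, definitionally. -/
noncomputable def siteRate (η : Cfg N) : ℝ :=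
  cin * (1 - ind (η i)) + cout * ind (η i)

/-- The Dirichlet form of the reservoir at site `i`, as a function of the density `f` and the
reference weight `ν`. The forms `Dminus` and `Dplus` are the instances `i = 0` and `i = Fin.last N`,
definitionally. -/
noncomputable def siteDirichletForm (f ν : Cfg N → ℝ) : ℝ :=
  (1 / 2) * ∑ η, siteRate i cin cout η * (√(f (flipCfg i η)) - √(f η)) ^ 2 * ν η

theorem flipCfg_involutive : Function.Involutive (flipCfg i) := fun η => by
  simp [flipCfg]

variable {cin cout} in
theorem siteRate_nonneg (hin : 0 ≤ cin) (hout : 0 ≤ cout) (η : Cfg N) :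
    0 ≤ siteRate i cin cout η := by
  cases hη : η i <;> simpa [siteRate, ind, hη]

theorem abs_siteRate_sub_siteRate_flipCfg (η : Cfg N) :
    |siteRate i cin cout η - siteRate i cin cout (flipCfg i η)| = |cout - cin| := by
  cases hη : η i <;> simp [siteRate, flipCfg, ind, hη, abs_sub_comm]

variable {cin cout} in
theorem site_entropy_production_le (hin : 0 ≤ cin) (hout : 0 ≤ cout) {f ν : Cfg N → ℝ}
    (hf : ∀ η, 0 < f η) (hν : ∀ η, 0 ≤ ν η) (hνi : ∀ η, ν (flipCfg i η) = ν η) :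
    ∑ η, f η * (siteRate i cin cout η * (log (f (flipCfg i η)) - log (f η))) * ν η
      ≤ -2 * siteDirichletForm i cin cout f ν + |cout - cin| * ∑ η, f η * ν η := by
  have hrate (η : Cfg N) :
      siteRate i cin cout η - siteRate i cin cout (flipCfg i η) ≤ |cout - cin| :=
    (le_abs_self _).trans_eq (abs_siteRate_sub_siteRate_flipCfg i cin cout η)
  have hbound := sum_mul_rate_mul_log_sub_log_le (σ := (flipCfg_involutive i).toPerm)
    hν hνi (siteRate_nonneg i hin hout) hrate hf
  rw [Function.Involutive.coe_toPerm] at hbound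
  rw [siteDirichletForm]
  linarith

end Site

theorem nuHalf_nonneg {N : ℕ} (η : Cfg N) : 0 ≤ nuHalf N η := by
  unfold nuHalf
  positivity

theorem boundary_entropy_production_bound_general {N : ℕ} {cinL coutL cinR coutR : ℝ}
    (hinL : 0 ≤ cinL) (houtL : 0 ≤ coutL) (hinR : 0 ≤ cinR) (houtR : 0 ≤ coutR)
    {f ν : Cfg N → ℝ} (hf : ∀ η, 0 < f η) (hν : ∀ η, 0 ≤ ν η)
    (hνL : ∀ η, ν (flipCfg 0 η) = ν η) (hνR : ∀ η, ν (flipCfg (Fin.last N) η) = ν η) :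
    ∑ η, f η * Lbd cinL coutL cinR coutR (fun ζ => log (f ζ)) η * ν η
      ≤ -2 * (Dminus N cinL coutL f ν + Dplus N cinR coutR f ν)
        + (|coutL - cinL| + |coutR - cinR|) * ∑ η, f η * ν η := by
  have hleft :
      ∑ η, f η * (cLeft cinL coutL η * (log (f (flipCfg 0 η)) - log (f η))) * ν η
        ≤ -2 * Dminus N cinL coutL f ν + |coutL - cinL| * ∑ η, f η * ν η :=
    site_entropy_production_le 0 hinL houtL hf hν hνL
  have hright :
      ∑ η, f η * (cRight cinR coutR η * (log (f (flipCfg (Fin.last N) η)) - log (f η))) * ν η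
        ≤ -2 * Dplus N cinR coutR f ν + |coutR - cinR| * ∑ η, f η * ν η :=
    site_entropy_production_le (Fin.last N) hinR houtR hf hν hνR
  simp only [Lbd, mul_add, add_mul, sum_add_distrib]
  linarith

/-- `⟨f, L_bd[log f]⟩_ν ≤ −2[D_−^N(μ;ν) + D_+^N(μ;ν)] + |c_out^− − c_in^−| + |c_out^+ − c_in^+|`. -/
theorem boundary_entropy_production_bound (N : ℕ) (hN : 1 ≤ N)
    (cinL coutL cinR coutR : ℝ)
    (h1 : 0 ≤ cinL) (h2 : 0 ≤ coutL) (h3 : 0 ≤ cinR) (h4 : 0 ≤ coutR)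
    (f : Cfg N → ℝ) (hf : ∀ η, 0 < f η)
    (hf1 : ∑ η : Cfg N, f η * nuHalf N η = 1) :
    ∑ η : Cfg N, f η * Lbd cinL coutL cinR coutR (fun ζ => Real.log (f ζ)) η * nuHalf N η
      ≤ -2 * (Dminus N cinL coutL f (nuHalf N) + Dplus N cinR coutR f (nuHalf N))
        + |coutL - cinL| + |coutR - cinR| := by
  simpa only [hf1, mul_one, ← add_assoc] using boundary_entropy_production_bound_general
    h1 h2 h3 h4 hf nuHalf_nonneg (fun _ => rfl) (fun _ => rfl)
end

section
/- Let V ∈ C¹((0,1);ℝ) with inf_{x∈(0,1)} V(x) > 0, and let K : ℕ → ℕ satisfy K(N) ≥ 1 and K(N)/N → 0 as N → ∞. For each N define n(N) = min{ n ∈ ℕ : n ≥ K(N) and sup{ |V'(x)| : x ∈ [(n−K(N))/N, 1−(n−K(N))/N] } ≤ N/K(N) } (with the supremum over the empty set taken to be 0, so n(N) is well defined). Then: (i) n(N)/N → 0 as N → ∞; (ii) there exists a constant C = C(V) such that for all sufficiently large N, for all integers i with n(N) ≤ i ≤ N−n(N) and all integers j with |j| < K(N), ∫_{i/N − 1/(2N)}^{i/N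 + 1/(2N)} V(x) dx ≤ (C/N) · V((i+j)/N). -/
open MeasureTheory Set Filter Topology

/-- `n(N)`: the smallest `n ≥ K(N)` such that
`sup{ |V'(x)| : x ∈ [(n−K(N))/N, 1−(n−K(N))/N] } ≤ N/K(N)`
(the supremum over the empty set being `0`). -/
noncomputable def nIdx (V : ℝ → ℝ) (K : ℕ → ℕ) (N : ℕ) : ℕ :=
  sInf {n : ℕ | K N ≤ n ∧
    (⨆ x ∈ Set.Icc (((n : ℝ) - K N) / N) (1 - ((n : ℝ) - K N) / N),
        ENNReal.ofReal |deriv V x|)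
      ≤ ENNReal.ofReal ((N : ℝ) / K N)}

/-!
The choice of `n(N)` makes `V` Lipschitz with constant `N / K(N)` on the points at distance less
than `K(N) / N` from `[n(N) / N, 1 - n(N) / N]`, so `V` varies by at most `1` over a distance
`K(N) / N`. As `V ≥ c > 0`, an additive error `1` costs only a factor `1 + 1 / c`. Moreover
`n(N) = o(N)` because `V'` is bounded on every `[δ, 1 - δ]`, whereas `N / K(N) → ∞`.
-/

lemma setIntegral_le_measureReal_mul {α : Type*} [MeasurableSpace α] {μ : Measure α} {s : Set α}
    {f : α → ℝ} {B : ℝ} (hs : MeasurableSet s) (hμs : μ s ≠ ⊤) (hB : 0 ≤ B)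
    (hf : ∀ x ∈ s, f x ≤ B) : ∫ x in s, f x ∂μ ≤ μ.real s * B := by
  by_cases hint : IntegrableOn f s μ
  · calc ∫ x in s, f x ∂μ ≤ ∫ _ in s, B ∂μ :=
          setIntegral_mono_on hint (integrableOn_const hμs) hs hf
      _ = μ.real s * B := by rw [setIntegral_const, smul_eq_mul]
  · rw [integral_undef hint]
    positivity

lemma le_one_add_div_mul_of_abs_deriv_le {f : ℝ → ℝ} {s : Set ℝ} {L a c x y : ℝ}
    (hs : Convex ℝ s) (hf : ∀ z ∈ s, DifferentiableAt ℝ f z) (hL : ∀ z ∈ s, |deriv f z| ≤ L)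
    (hx : x ∈ s) (hy : y ∈ s) (hxy : L * |x - y| ≤ a) (hc : 0 < c) (hcy : c ≤ f y) :
    f x ≤ (1 + a / c) * f y := by
  have hL₀ : 0 ≤ L := (abs_nonneg _).trans (hL y hy)
  have ha : 0 ≤ a := (by positivity : 0 ≤ L * |x - y|).trans hxy
  have hsub : f x - f y ≤ a :=
    (le_abs_self _).trans ((hs.norm_image_sub_le_of_norm_deriv_le hf hL hy hx).trans hxy)
  calc f x ≤ f y + a / c * c := by rw [div_mul_cancel₀ _ hc.ne']; linarith
    _ ≤ f y + a / c * f y := by gcongr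
    _ = (1 + a / c) * f y := by ring

lemma bddAbove_image_abs_deriv_of_contDiffOn {f : ℝ → ℝ} {s t : Set ℝ} (hf : ContDiffOn ℝ 1 f s)
    (hs : IsOpen s) (ht : IsCompact t) (hts : t ⊆ s) :
    BddAbove ((fun x => |deriv f x|) '' t) :=
  ht.bddAbove_image ((hf.continuousOn_deriv_of_isOpen hs le_rfl).abs.mono hts)

section nIdx

variable {V : ℝ → ℝ} {K : ℕ → ℕ} {N : ℕ}

lemma nIdx_le_of_abs_deriv_le {n : ℕ} (hKn : K N ≤ n)
    (h : ∀ x ∈ Icc (((n : ℝ) - K N) / N) (1 - ((n : ℝ) - K N) / N), |deriv V x| ≤ N / K N) :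
    nIdx V K N ≤ n :=
  Nat.sInf_le ⟨hKn, iSup₂_le fun x hx => ENNReal.ofReal_le_ofReal (h x hx)⟩

lemma nIdx_spec (hN : 0 < N) :
    K N ≤ nIdx V K N ∧
      ∀ x ∈ Icc (((nIdx V K N : ℝ) - K N) / N) (1 - ((nIdx V K N : ℝ) - K N) / N),
        |deriv V x| ≤ N / K N := by
  have hne : {n : ℕ | K N ≤ n ∧
      (⨆ x ∈ Icc (((n : ℝ) - K N) / N) (1 - ((n : ℝ) - K N) / N), ENNReal.ofReal |deriv V x|)
        ≤ ENNReal.ofReal ((N : ℝ) / K N)}.Nonempty := by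
    have hN' : (N : ℝ) ≠ 0 := by positivity
    -- For `n = K N + N` the interval is `[1, 0]`.
    refine ⟨K N + N, Nat.le_add_right _ _, ?_⟩
    simp [hN']
  obtain ⟨hK, hsup⟩ := Nat.sInf_mem hne
  exact ⟨hK, fun x hx =>
    (ENNReal.ofReal_le_ofReal_iff (by positivity)).1 (iSup₂_le_iff.1 hsup x hx)⟩

lemma nIdx_div_le {δ : ℝ} (hN : 0 < N) (hδ : 0 ≤ δ)
    (h : ∀ x ∈ Icc δ (1 - δ), |deriv V x| ≤ N / K N) :
    (nIdx V K N : ℝ) / N ≤ K N / N + δ + 1 / N := by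
  have hN' : (0 : ℝ) < N := Nat.cast_pos.2 hN
  have hle : nIdx V K N ≤ K N + ⌈δ * N⌉₊ := by
    refine nIdx_le_of_abs_deriv_le (Nat.le_add_right _ _) fun x hx => h x ?_
    have hδle : δ ≤ (((K N + ⌈δ * N⌉₊ : ℕ) : ℝ) - K N) / N := by
      rw [Nat.cast_add, add_sub_cancel_left, le_div_iff₀ hN']
      exact Nat.le_ceil _
    exact Icc_subset_Icc hδle (sub_le_sub_left hδle 1) hx
  calc (nIdx V K N : ℝ) / N ≤ (K N + (δ * N + 1)) / N := by
        gcongr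
        calc (nIdx V K N : ℝ) ≤ K N + ⌈δ * N⌉₊ := mod_cast hle
          _ ≤ K N + (δ * N + 1) := by gcongr; exact (Nat.ceil_lt_add_one (by positivity)).le
    _ = K N / N + δ + 1 / N := by field_simp; ring

lemma tendsto_nIdx_div (hV' : ∀ δ > 0, BddAbove ((fun x => |deriv V x|) '' Icc δ (1 - δ)))
    (hK : ∀ᶠ N in atTop, 0 < K N) (hKo : Tendsto (fun N : ℕ => (K N : ℝ) / N) atTop (𝓝 0)) :
    Tendsto (fun N : ℕ => (nIdx V K N : ℝ) / N) atTop (𝓝 0) := by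
  have hNK : Tendsto (fun N : ℕ => (N : ℝ) / K N) atTop atTop := by
    have hpos : ∀ᶠ N : ℕ in atTop, (K N : ℝ) / N ∈ Ioi 0 := by
      filter_upwards [hK, eventually_gt_atTop 0] with N hKN hN
      rw [mem_Ioi]; positivity
    simpa only [Function.comp_def, inv_div] using
      tendsto_inv_nhdsGT_zero.comp (tendsto_nhdsWithin_iff.2 ⟨hKo, hpos⟩)
  refine tendsto_order.2 ⟨fun a ha => .of_forall fun N => ha.trans_le (by positivity),
    fun ε hε => ?_⟩
  obtain ⟨M, hM⟩ := hV' (ε / 2) (half_pos hε)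
  have hsmall : ∀ᶠ N : ℕ in atTop, (K N : ℝ) / N + 1 / N < ε / 2 := by
    have hlim := hKo.add (tendsto_one_div_atTop_nhds_zero_nat (𝕜 := ℝ))
    rw [add_zero] at hlim
    exact hlim.eventually_lt_const (half_pos hε)
  filter_upwards [hNK.eventually_ge_atTop M, hsmall, eventually_gt_atTop 0] with N hMN hN_small hN
  have hdiv : (nIdx V K N : ℝ) / N ≤ K N / N + ε / 2 + 1 / N :=
    nIdx_div_le hN (half_pos hε).le fun x hx => (hM (mem_image_of_mem _ hx)).trans hMN
  linarith

variable (V K N) in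
/-- The part of `(0, 1)` on which the choice of `n(N)` ensures `|V'| ≤ N / K(N)`. The endpoints
`0` and `1`, which the closed interval contains when `n(N) = K(N)`, are excluded because `V` need
not be differentiable there. -/
def nIdxRegion : Set ℝ :=
  Icc (((nIdx V K N : ℝ) - K N) / N) (1 - ((nIdx V K N : ℝ) - K N) / N) ∩ Ioo 0 1

lemma convex_nIdxRegion : Convex ℝ (nIdxRegion V K N) :=
  (convex_Icc _ _).inter (convex_Ioo _ _)

lemma mem_nIdxRegion_of_abs_sub_lt {u x : ℝ} (hN : 0 < N)
    (hu : u ∈ Icc ((nIdx V K N : ℝ) / N) (1 - nIdx V K N / N)) (hx : |x - u| < K N / N) :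
    x ∈ nIdxRegion V K N := by
  have hKn : (K N : ℝ) / N ≤ nIdx V K N / N := by
    gcongr
    exact (nIdx_spec hN).1
  obtain ⟨hu₁, hu₂⟩ := hu
  obtain ⟨hx₁, hx₂⟩ := abs_lt.1 hx
  rw [nIdxRegion, sub_div]
  exact ⟨⟨by linarith, by linarith⟩, by linarith, by linarith⟩

lemma le_one_add_one_div_mul_of_mem_nIdxRegion {c x y : ℝ} (hV : DifferentiableOn ℝ V (Ioo 0 1))
    (hN : 0 < N) (hx : x ∈ nIdxRegion V K N) (hy : y ∈ nIdxRegion V K N)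
    (hxy : |x - y| ≤ K N / N) (hc : 0 < c) (hcy : c ≤ V y) :
    V x ≤ (1 + 1 / c) * V y := by
  have hvar : (N : ℝ) / K N * |x - y| ≤ 1 :=
    calc (N : ℝ) / K N * |x - y| ≤ N / K N * (K N / N) := by gcongr
      _ = (N : ℝ) / K N * ((N : ℝ) / K N)⁻¹ := by rw [inv_div]
      _ ≤ 1 := mul_inv_le_one
  exact le_one_add_div_mul_of_abs_deriv_le convex_nIdxRegion
    (fun z hz => hV.differentiableAt (isOpen_Ioo.mem_nhds hz.2))
    (fun z hz => (nIdx_spec hN).2 z hz.1) hx hy hvar hc hcy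

lemma setIntegral_Icc_sub_add_le_of_abs_sub_add_lt {c r u y : ℝ}
    (hV : DifferentiableOn ℝ V (Ioo 0 1)) (hN : 0 < N)
    (hu : u ∈ Icc ((nIdx V K N : ℝ) / N) (1 - nIdx V K N / N)) (hr : 0 ≤ r)
    (hyu : |y - u| + r < K N / N) (hc : 0 < c) (hcy : c ≤ V y) :
    ∫ x in Icc (u - r) (u + r), V x ≤ 2 * r * ((1 + 1 / c) * V y) := by
  have hy : y ∈ nIdxRegion V K N := mem_nIdxRegion_of_abs_sub_lt hN hu (by linarith)
  have hVy : 0 < V y := hc.trans_le hcy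
  have hle : ∀ x ∈ Icc (u - r) (u + r), V x ≤ (1 + 1 / c) * V y := by
    intro x hx
    have hxu : |x - u| ≤ r := abs_sub_le_iff.2 ⟨by linarith [hx.2], by linarith [hx.1]⟩
    refine le_one_add_one_div_mul_of_mem_nIdxRegion hV hN
      (mem_nIdxRegion_of_abs_sub_lt hN hu (by linarith [abs_nonneg (y - u)])) hy ?_ hc hcy
    calc |x - y| ≤ |x - u| + |u - y| := abs_sub_le x u y
      _ ≤ K N / N := by rw [abs_sub_comm u y]; linarith
  calc ∫ x in Icc (u - r) (u + r), V x
      ≤ volume.real (Icc (u - r) (u + r)) * ((1 + 1 / c) * V y) :=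
        setIntegral_le_measureReal_mul measurableSet_Icc measure_Icc_lt_top.ne (by positivity) hle
    _ = 2 * r * ((1 + 1 / c) * V y) := by
        rw [Real.volume_real_Icc_of_le (by linarith)]; ring

lemma setIntegral_cell_le {c : ℝ} {i : ℕ} {j : ℤ} (hV : DifferentiableOn ℝ V (Ioo 0 1))
    (hc : 0 < c) (hcV : ∀ x ∈ Ioo (0 : ℝ) 1, c ≤ V x) (hN : 0 < N)
    (hi : nIdx V K N ≤ i) (hiN : i + nIdx V K N ≤ N) (hj : |j| < K N) :
    ∫ x in Icc ((i : ℝ) / N - 1 / (2 * N)) ((i : ℝ) / N + 1 / (2 * N)), V x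
      ≤ (1 + 1 / c) / N * V (((i : ℝ) + j) / N) := by
  have hN' : (0 : ℝ) < N := Nat.cast_pos.2 hN
  have hu : (i : ℝ) / N ∈ Icc ((nIdx V K N : ℝ) / N) (1 - nIdx V K N / N) := by
    refine ⟨by gcongr, le_sub_iff_add_le.2 ?_⟩
    rw [← add_div, div_le_one hN']
    exact_mod_cast hiN
  have hdist : |((i : ℝ) + j) / N - i / N| + 1 / (2 * N) < K N / N := by
    have hj' : |(j : ℝ)| + 1 ≤ K N := mod_cast hj
    rw [← sub_div, add_sub_cancel_left, abs_div, Nat.abs_cast,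
      ← div_div, ← add_div, div_lt_div_iff_of_pos_right hN']
    linarith
  have hr : 0 ≤ 1 / (2 * (N : ℝ)) := by positivity
  have hy : ((i : ℝ) + j) / N ∈ nIdxRegion V K N :=
    mem_nIdxRegion_of_abs_sub_lt hN hu (by linarith)
  calc ∫ x in Icc ((i : ℝ) / N - 1 / (2 * N)) ((i : ℝ) / N + 1 / (2 * N)), V x
      ≤ 2 * (1 / (2 * N)) * ((1 + 1 / c) * V (((i : ℝ) + j) / N)) :=
        setIntegral_Icc_sub_add_le_of_abs_sub_add_lt hV hN hu hr hdist hc (hcV _ hy.2)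
    _ = (1 + 1 / c) / N * V (((i : ℝ) + j) / N) := by field_simp

end nIdx

theorem mesoscopic_V_comparison_general {V : ℝ → ℝ} {c : ℝ}
    (hV : DifferentiableOn ℝ V (Ioo 0 1))
    (hV' : ∀ δ > 0, BddAbove ((fun x => |deriv V x|) '' Icc δ (1 - δ)))
    (hc : 0 < c) (hcV : ∀ x ∈ Ioo (0 : ℝ) 1, c ≤ V x)
    {K : ℕ → ℕ} (hK : ∀ᶠ N in atTop, 0 < K N)
    (hKo : Tendsto (fun N : ℕ => (K N : ℝ) / N) atTop (𝓝 0)) :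
    Tendsto (fun N : ℕ => (nIdx V K N : ℝ) / N) atTop (𝓝 0) ∧
    ∀ N : ℕ, 0 < N → ∀ i : ℕ, nIdx V K N ≤ i → i + nIdx V K N ≤ N → ∀ j : ℤ, |j| < K N →
      ∫ x in Icc ((i : ℝ) / N - 1 / (2 * N)) ((i : ℝ) / N + 1 / (2 * N)), V x
        ≤ (1 + 1 / c) / N * V (((i : ℝ) + j) / N) :=
  ⟨tendsto_nIdx_div hV' hK hKo, fun _ hN _ hi hiN _ hj =>
    setIntegral_cell_le hV hc hcV hN hi hiN hj⟩

/-- `n(N) = o(N)`, and there is a constant `C = C(V)` such that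
for all sufficiently large `N`, all `n(N) ≤ i ≤ N − n(N)` and all `|j| < K(N)`,
`∫_{i/N − 1/(2N)}^{i/N + 1/(2N)} V(x) dx ≤ (C/N) · V((i+j)/N)`. -/
theorem mesoscopic_V_comparison (V : ℝ → ℝ)
    (hV : ContDiffOn ℝ 1 V (Set.Ioo 0 1))
    (hVinf : ∃ c > 0, ∀ x ∈ Set.Ioo (0 : ℝ) 1, c ≤ V x)
    (K : ℕ → ℕ) (hK1 : ∀ N, 1 ≤ K N)
    (hKo : Filter.Tendsto (fun N : ℕ => (K N : ℝ) / N) Filter.atTop (𝓝 0)) :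
    Filter.Tendsto (fun N : ℕ => (nIdx V K N : ℝ) / N) Filter.atTop (𝓝 0) ∧
    ∃ C : ℝ, ∀ᶠ N : ℕ in Filter.atTop,
      ∀ i : ℕ, nIdx V K N ≤ i → i + nIdx V K N ≤ N →
        ∀ j : ℤ, |j| < K N →
          (∫ x in Set.Icc ((i : ℝ) / N - 1 / (2 * N)) ((i : ℝ) / N + 1 / (2 * N)), V x)
            ≤ C / N * V (((i : ℝ) + j) / N) := by
  obtain ⟨c, hc, hcV⟩ := hVinf
  obtain ⟨hlim, hint⟩ := mesoscopic_V_comparison_general (hV.differentiableOn one_ne_zero)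
    (fun δ hδ => bddAbove_image_abs_deriv_of_contDiffOn hV isOpen_Ioo isCompact_Icc <|
      Icc_subset_Ioo hδ (sub_lt_self 1 hδ)) hc hcV (.of_forall hK1) hKo
  exact ⟨hlim, 1 + 1 / c, (eventually_gt_atTop 0).mono hint⟩
end
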